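/- In the nonlinear setting with standing conditions (N1)–(N5): limsup_{n→∞} H_{h_n}(J_n) ≤ 1. -/

import Mathlib

open Set Filter MeasureTheory Topology

noncomputable section

/-- Composition `g_{i₁} ∘ g_{i₂} ∘ ⋯ ∘ g_{i_l}` along a finite word. -/
def wordComp (g : ℕ → ℝ → ℝ) : List ℕ → ℝ → ℝ
  | [] => id
  | k :: w => g k ∘ wordComp g w

/-- The limit set `J_n` of the IFS `S_n = {g_1, …, g_n}`. -/
def limitSet (g : ℕ → ℝ → ℝ) (n : ℕ) : Set ℝ :=
  ⋂ l : ℕ, ⋃ w ∈ {w : List ℕ | w.length = l + 1 ∧ ∀ i ∈ w, 1 ≤ i ∧ i ≤ n},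
    wordComp g w '' Set.Icc (0 : ℝ) 1

/-- The distortion `κ(g) = sup_{x,y ∈ [0,1]} |g′(y)|/|g′(x)|` of a map with derivative `f'`. -/
def distortion (f' : ℝ → ℝ) : ℝ :=
  ⨆ x ∈ Set.Icc (0 : ℝ) 1, ⨆ y ∈ Set.Icc (0 : ℝ) 1, |f' y| / |f' x|

/-- The nonlinear setting of the paper: a strictly decreasing sequence `b_k → 0` with `b_0 = 1`,
    decreasing `C²` diffeomorphisms `g_k : [0,1] → [b_k, b_{k-1}]` (with first and second
    derivatives `g'` and `g''`), the Hausdorff dimensions `h_n` of the limit sets `J_n`, and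
    the standing conditions (N1)–(N5). -/
structure NonlinearIFS where
  b : ℕ → ℝ
  g : ℕ → ℝ → ℝ
  g' : ℕ → ℝ → ℝ
  g'' : ℕ → ℝ → ℝ
  h : ℕ → ℝ
  b_zero : b 0 = 1
  b_anti : StrictAnti b
  b_lim : Filter.Tendsto b Filter.atTop (nhds 0)
  g_image : ∀ k, 1 ≤ k → g k '' Set.Icc (0 : ℝ) 1 = Set.Icc (b k) (b (k - 1))
  g_anti : ∀ k, 1 ≤ k → StrictAntiOn (g k) (Set.Icc (0 : ℝ) 1)
  g_zero : ∀ k, 1 ≤ k → g k 0 = b (k - 1)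
  g_one : ∀ k, 1 ≤ k → g k 1 = b k
  deriv1 : ∀ k, 1 ≤ k → ∀ x ∈ Set.Icc (0 : ℝ) 1, HasDerivAt (g k) (g' k x) x
  deriv2 : ∀ k, 1 ≤ k → ∀ x ∈ Set.Icc (0 : ℝ) 1, HasDerivAt (g' k) (g'' k x) x
  deriv_ne : ∀ k, 1 ≤ k → ∀ x ∈ Set.Icc (0 : ℝ) 1, g' k x ≠ 0
  h_dim : ∀ n, 1 ≤ n → dimH (limitSet g n) = ENNReal.ofReal (h n)
  N1 : Filter.Tendsto (fun n : ℕ => (1 - h n) * Real.log n) Filter.atTop (nhds 0)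
  N2 : Filter.Tendsto (fun n : ℕ => ⨆ k ∈ Set.Ici n, b k / b (k + 1)) Filter.atTop (nhds 1)
  N3 : ∃ c : ℝ, 0 < c ∧ ∀ n, 1 ≤ n → ∀ x ∈ Set.Icc (0 : ℝ) 1, |g'' n x / g' n x| < c
  N4 : Filter.Tendsto (fun n : ℕ => distortion (g' n)) Filter.atTop (nhds 1)
  N5 : ∃ α : ℝ, α < 1 ∧ ∀ n, 1 ≤ n → ∀ x ∈ Set.Icc (0 : ℝ) 1, |g' n x| < α

/-- The normalized Hausdorff measure `m_n(A) = H_{h_n}(A ∩ J_n)/H_{h_n}(J_n)`. -/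
def normMeas (S : NonlinearIFS) (n : ℕ) (A : Set ℝ) : ENNReal :=
  μH[S.h n] (A ∩ limitSet S.g n) / μH[S.h n] (limitSet S.g n)

def preW {F : Type} (ω : ℕ → F) (j : ℕ) : List F := List.ofFn (fun i : Fin j => ω i)

lemma preW_succ {F : Type} (ω : ℕ → F) (j : ℕ) : preW ω (j+1) = preW ω j ++ [ω j] := by
  unfold preW
  rw [List.ofFn_succ']
  simp [List.concat_eq_append]

lemma preW_length {F : Type} (ω : ℕ → F) (j : ℕ) : (preW ω j).length = j := by
  simp [preW]

lemma preW_congr {F : Type} (ω ω' : ℕ → F) (j : ℕ) (h : ∀ i < j, ω' i = ω i) :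
    preW ω' j = preW ω j := by
  unfold preW
  congr 1
  funext i
  exact h i i.2

lemma preW_prod {F : Type} (p : F → ℝ) (ω : ℕ → F) (j : ℕ) :
    ((preW ω j).map p).prod = ∏ i ∈ Finset.range j, p (ω i) := by
  induction j with
  | zero => simp [preW]
  | succ j ih => rw [preW_succ, Finset.prod_range_succ, ← ih]; simp

lemma abs_dim {F : Type} [Fintype F] (G : List F → ℝ → ℝ) (p : F → ℝ) (hp : ∀ i, 0 ≤ p i)
    (hps : ∑ i, p i = 1) (K : Set ℝ) (hKne : K.Nonempty) (hK : IsCompact K)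
    (hGa : ∀ u v, G (u ++ v) = G u ∘ G v)
    (hmaps : ∀ i, MapsTo (G [i]) K K) (hcont : ∀ u, ContinuousOn (G u) K)
    (hdisj : ∀ i j, i ≠ j → Disjoint (G [i] '' K) (G [j] '' K))
    (t C α : ℝ) (ht : 0 < t) (hC : 0 < C) (hα0 : 0 ≤ α) (hα1 : α < 1)
    (h1 : ∀ u, ∀ x ∈ K, ∀ y ∈ K, |G u x - G u y| ≤ α ^ u.length)
    (h2 : ∀ u, ∀ x ∈ K, ∀ y ∈ K, (u.map p).prod * |x - y| ^ t ≤ C * |G u x - G u y| ^ t)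
    (h3 : ∀ u : List F, (u.map p).prod ≤ (α ^ u.length) ^ t)
    (E : Set ℝ) (hE : ∀ x, (∀ l, ∃ u : List F, u.length = l ∧ x ∈ G u '' K) → x ∈ E) :
    ENNReal.ofReal t ≤ dimH E := by
  -- separation
  obtain ⟨ρ, hρ0, hρ⟩ : ∃ ρ : ℝ, 0 < ρ ∧ ∀ i j, i ≠ j → ∀ x ∈ K, ∀ y ∈ K,
      ρ ≤ |G [i] x - G [j] y| := by
    have key : ∀ᶠ ρ in 𝓝[>] (0:ℝ), ∀ i j, i ≠ j → ∀ x ∈ K, ∀ y ∈ K,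
        ρ ≤ |G [i] x - G [j] y| := by
      rw [eventually_all]; intro i
      rw [eventually_all]; intro j
      by_cases hij : i = j
      · simp [hij]
      obtain ⟨δ, hδ, hd⟩ := (hdisj i j hij).exists_thickenings (hK.image_of_continuousOn (hcont _))
        (hK.image_of_continuousOn (hcont _)).isClosed
      filter_upwards [Ioo_mem_nhdsGT hδ] with ρ hρ _ x hx y hy
      by_contra hlt
      push Not at hlt
      refine (Set.disjoint_left.1 hd : ∀ ⦃a⦄, _) (a := G [i] x) ?_ ?_
      · exact Metric.self_subset_thickening hδ _ (mem_image_of_mem _ hx)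
      · rw [Metric.mem_thickening_iff]
        exact ⟨_, mem_image_of_mem _ hy, by rw [Real.dist_eq]; linarith [hρ.2]⟩
    obtain ⟨ρ, h, h'⟩ := (key.and self_mem_nhdsWithin).exists
    exact ⟨ρ, h', h⟩
  -- measure
  let _ : MeasurableSpace F := ⊤
  have : DiscreteMeasurableSpace F := ⟨fun _ => trivial⟩
  let ν : Measure F := ∑ i, ENNReal.ofReal (p i) • Measure.dirac i
  have hν : ∀ i, ν {i} = ENNReal.ofReal (p i) := by
    intro i
    classical
    simp [ν, Measure.finsetSum_apply, Set.indicator_apply]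
  have : IsProbabilityMeasure ν := by
    constructor
    simp only [ν, Measure.finsetSum_apply, Measure.smul_apply, measure_univ, smul_eq_mul, mul_one]
    rw [← ENNReal.ofReal_sum_of_nonneg (fun i _ => hp i), hps]; simp
  let M : Measure (ℕ → F) := Measure.infinitePi (fun _ : ℕ => ν)
  have hcyl : ∀ (ω : ℕ → F) (j : ℕ), M {ω' | ∀ i < j, ω' i = ω i}
      = ENNReal.ofReal ((preW ω j).map p).prod := by
    intro ω j
    have : {ω' : ℕ → F | ∀ i < j, ω' i = ω i} =
        ((Finset.range j : Finset ℕ) : Set ℕ).pi (fun i => {ω i}) := by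
      ext; simp [Set.mem_pi]
    rw [this, Measure.infinitePi_pi _ (fun i _ => MeasurableSet.of_discrete), preW_prod,
      ENNReal.ofReal_prod_of_nonneg (fun i _ => hp _)]
    simp [hν]
  -- coding map
  have hnest : ∀ (ω : ℕ → F) (j : ℕ), G (preW ω (j+1)) '' K ⊆ G (preW ω j) '' K := by
    intro ω j
    rw [preW_succ, hGa, image_comp]
    exact image_mono (hmaps _).image_subset
  have hpi : ∀ ω : ℕ → F, ∃ x, ∀ j, x ∈ G (preW ω j) '' K := by
    intro ω
    have := IsCompact.nonempty_iInter_of_sequence_nonempty_isCompact_isClosed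
      (fun j => G (preW ω j) '' K) (hnest ω) (fun j => hKne.image _)
      (hK.image_of_continuousOn (hcont _))
      (fun j => (hK.image_of_continuousOn (hcont _)).isClosed)
    obtain ⟨x, hx⟩ := this
    exact ⟨x, fun j => mem_iInter.1 hx j⟩
  choose π hπ using hpi
  obtain ⟨x0, hx0⟩ := hKne
  have hpm : Measurable π := by
    refine measurable_of_tendsto_metrizable (f := fun j ω => G (preW ω j) x0) ?_ ?_
    · intro j
      have : (fun ω : ℕ → F => G (preW ω j) x0) =
          (fun v : Fin j → F => G (List.ofFn v) x0) ∘ (fun ω (i : Fin j) => ω i) := rfl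
      rw [this]
      refine Measurable.comp Measurable.of_discrete ?_
      exact measurable_pi_lambda _ (fun i => measurable_pi_apply _)
    · rw [tendsto_pi_nhds]
      intro ω
      rw [tendsto_iff_dist_tendsto_zero]
      refine squeeze_zero (fun _ => dist_nonneg) (fun j => ?_)
        (tendsto_pow_atTop_nhds_zero_of_lt_one hα0 hα1)
      obtain ⟨y, hy, hy'⟩ := hπ ω j
      rw [← hy', Real.dist_eq]
      simpa [preW_length] using h1 (preW ω j) x0 hx0 y hy
  set c0 : ENNReal := ENNReal.ofReal (C / ρ ^ t) with hc0
  have hρt : 0 < ρ ^ t := Real.rpow_pos_of_pos hρ0 t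
  have hc0p : 0 < c0 := by rw [hc0, ENNReal.ofReal_pos]; positivity
  have hc0t : c0 ≠ ⊤ := ENNReal.ofReal_ne_top
  have hclosed : ∀ s : Set ℝ, M (π ⁻¹' s) ≤ c0 * Metric.ediam s ^ t := by
    intro s
    rcases (π ⁻¹' s).eq_empty_or_nonempty with he | ⟨ω, hω⟩
    · simp [he]
    by_cases hd : ∃ j, ∃ ω' ∈ π ⁻¹' s, ω' j ≠ ω j
    · classical
      obtain ⟨ω', hω', hne⟩ := Nat.find_spec hd
      have hmin : ∀ i < Nat.find hd, ∀ ω' ∈ π ⁻¹' s, ω' i = ω i := by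
        intro i hi ω' hω'
        by_contra h
        exact Nat.find_min hd hi ⟨ω', hω', h⟩
      generalize Nat.find hd = j at hne hmin
      have hsub : π ⁻¹' s ⊆ {ω' | ∀ i < j, ω' i = ω i} := fun ω'' h i hi => hmin i hi ω'' h
      refine (measure_mono hsub).trans ?_
      rw [hcyl]
      obtain ⟨y, hy, hy'⟩ := hπ ω (j+1)
      obtain ⟨z, hz, hz'⟩ := hπ ω' (j+1)
      rw [preW_succ, hGa] at hy' hz'
      rw [preW_congr ω ω' j (fun i hi => hmin i hi ω' hω')] at hz'
      simp only [Function.comp] at hy' hz'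
      have a1 := h2 (preW ω j) _ (hmaps (ω j) hy) _ (hmaps (ω' j) hz)
      rw [hy', hz'] at a1
      have a2 := hρ _ _ hne.symm y hy z hz
      have a3 : ρ ^ t ≤ |G [ω j] y - G [ω' j] z| ^ t :=
        Real.rpow_le_rpow hρ0.le a2 ht.le
      have hP : 0 ≤ ((preW ω j).map p).prod := by
        rw [preW_prod]; exact Finset.prod_nonneg (fun i _ => hp _)
      have a4 : ((preW ω j).map p).prod ≤ C / ρ ^ t * |π ω - π ω'| ^ t := by
        rw [div_mul_eq_mul_div, le_div_iff₀ hρt]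
        exact (mul_le_mul_of_nonneg_left a3 hP).trans a1
      refine (ENNReal.ofReal_le_ofReal a4).trans ?_
      rw [ENNReal.ofReal_mul (by positivity), ← ENNReal.ofReal_rpow_of_nonneg (abs_nonneg _) ht.le]
      gcongr
      have := Metric.edist_le_ediam_of_mem (s := s) (x := π ω) (y := π ω') hω hω'
      rwa [edist_dist, Real.dist_eq] at this
    · push Not at hd
      have : M (π ⁻¹' s) ≤ 0 := by
        have hle : ∀ j, M (π ⁻¹' s) ≤ ENNReal.ofReal ((α ^ t) ^ j) := by
          intro j
          have hsub : π ⁻¹' s ⊆ {ω' | ∀ i < j, ω' i = ω i} := fun ω'' h i hi => hd i ω'' h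
          refine (measure_mono hsub).trans ?_
          rw [hcyl]
          refine ENNReal.ofReal_le_ofReal ((h3 _).trans ?_)
          rw [preW_length, ← Real.rpow_natCast, ← Real.rpow_natCast, ← Real.rpow_mul hα0,
            ← Real.rpow_mul hα0, mul_comm]
        have hl : Tendsto (fun j => ENNReal.ofReal ((α ^ t) ^ j)) atTop (𝓝 0) := by
          rw [← ENNReal.ofReal_zero]
          exact ENNReal.tendsto_ofReal (tendsto_pow_atTop_nhds_zero_of_lt_one
            (Real.rpow_nonneg hα0 t) (Real.rpow_lt_one hα0 hα1 ht))
        exact ge_of_tendsto' hl hle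
      exact this.trans zero_le
  have hμ : c0⁻¹ • (M.map π) ≤ μH[t] := by
    refine Measure.le_hausdorffMeasure t _ 1 one_pos (fun s _ => ?_)
    rw [Measure.smul_apply, smul_eq_mul]
    calc c0⁻¹ * (M.map π) s ≤ c0⁻¹ * (M.map π) (closure s) := by
          gcongr; exact subset_closure
      _ = c0⁻¹ * M (π ⁻¹' closure s) := by rw [Measure.map_apply hpm isClosed_closure.measurableSet]
      _ ≤ c0⁻¹ * (c0 * Metric.ediam (closure s) ^ t) := by gcongr; exact hclosed _
      _ = Metric.ediam s ^ t := by
          rw [← mul_assoc, ENNReal.inv_mul_cancel hc0p.ne' hc0t, one_mul, Metric.ediam_closure]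
  have hpos : μH[((t.toNNReal : NNReal) : ℝ)] E ≠ 0 := by
    rw [Real.coe_toNNReal t ht.le]
    have h4 := hμ E
    have h5 : M (π ⁻¹' E) = 1 := by
      have : π ⁻¹' E = univ := eq_univ_of_forall (fun ω => hE _ (fun l =>
        ⟨preW ω l, preW_length _ _, hπ ω l⟩))
      rw [this]; exact measure_univ
    have h6 := Measure.le_map_apply (μ := M) hpm.aemeasurable E
    rw [h5] at h6
    rw [Measure.smul_apply, smul_eq_mul] at h4
    have h7 : c0⁻¹ ≤ μH[t] E := by
      refine le_trans ?_ h4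
      calc c0⁻¹ = c0⁻¹ * 1 := (mul_one _).symm
        _ ≤ _ := by gcongr
    exact (lt_of_lt_of_le (ENNReal.inv_pos.2 hc0t) h7).ne'
  exact le_dimH_of_hausdorffMeasure_ne_zero hpos

lemma wordComp_append (g : ℕ → ℝ → ℝ) (u v : List ℕ) :
    wordComp g (u ++ v) = wordComp g u ∘ wordComp g v := by
  induction u with
  | nil => rfl
  | cons k u ih => simp only [List.cons_append, wordComp, ih]; rfl

def bdist (f : ℝ → ℝ) (A : Set ℝ) (C : ℝ) : Prop :=
  ∀ x ∈ A, ∀ y ∈ A, ∀ x' ∈ A, ∀ y' ∈ A, |f x - f y| * |x' - y'| ≤ C * (|f x' - f y'| * |x - y|)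

lemma bdist_comp {f g : ℝ → ℝ} {A : Set ℝ} {C C' : ℝ} (hC : 0 ≤ C)
    (hinj : InjOn g A) (hf : bdist f (g '' A) C) (hg : bdist g A C') :
    bdist (f ∘ g) A (C * C') := by
  intro x hx y hy x' hx' y' hy'
  have hf1 := hf _ (mem_image_of_mem g hx) _ (mem_image_of_mem g hy) _ (mem_image_of_mem g hx') _
    (mem_image_of_mem g hy')
  have hg1 := hg x hx y hy x' hx' y' hy'
  by_cases e2 : x' = y'
  · subst e2; simp
  by_cases e1 : x = y
  · subst e1; simp
  have p1 : 0 < |g x - g y| := abs_pos.2 (sub_ne_zero.2 (fun h => e1 (hinj hx hy h)))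
  have p2 : 0 < |g x' - g y'| := abs_pos.2 (sub_ne_zero.2 (fun h => e2 (hinj hx' hy' h)))
  simp only [Function.comp]
  have := mul_le_mul hf1 hg1 (by positivity) (by positivity)
  refine le_of_mul_le_mul_right (a := |g x - g y| * |g x' - g y'|) ?_ (by positivity)
  nlinarith [this]

namespace NonlinearIFS
variable (S : NonlinearIFS)

lemma b_pos (k : ℕ) : 0 < S.b k := by
  have h1 : 0 ≤ S.b (k+1) := S.b_anti.antitone.le_of_tendsto S.b_lim (k+1)
  exact h1.trans_lt (S.b_anti (Nat.lt_succ_self k))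

lemma b_le_one (k : ℕ) : S.b k ≤ 1 := by
  rw [← S.b_zero]; exact S.b_anti.antitone (Nat.zero_le k)

lemma g_mem {k : ℕ} (hk : 1 ≤ k) {x : ℝ} (hx : x ∈ Icc (0:ℝ) 1) :
    S.g k x ∈ Icc (S.b k) (S.b (k-1)) := by
  rw [← S.g_image k hk]; exact mem_image_of_mem _ hx

lemma g_maps {k : ℕ} (hk : 1 ≤ k) : MapsTo (S.g k) (Icc (0:ℝ) 1) (Icc 0 1) := by
  intro x hx
  have := S.g_mem hk hx
  exact ⟨(S.b_pos k).le.trans this.1, this.2.trans (S.b_le_one _)⟩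

lemma word_maps (w : List ℕ) (hw : ∀ i ∈ w, 1 ≤ i) :
    MapsTo (wordComp S.g w) (Icc (0:ℝ) 1) (Icc 0 1) := by
  induction w with
  | nil => exact mapsTo_id _
  | cons k w ih =>
    exact (S.g_maps (hw k (by simp))).comp (ih (fun i hi => hw i (by simp [hi])))

lemma word_inj (w : List ℕ) (hw : ∀ i ∈ w, 1 ≤ i) :
    InjOn (wordComp S.g w) (Icc (0:ℝ) 1) := by
  induction w with
  | nil => exact injOn_id _
  | cons k w ih =>
    have h' : ∀ i ∈ w, 1 ≤ i := fun i hi => hw i (by simp [hi])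
    exact (S.g_anti k (hw k (by simp))).injOn.comp (ih h') (S.word_maps w h')

lemma slope {k : ℕ} (hk : 1 ≤ k) {x y : ℝ} (hx : x ∈ Icc (0:ℝ) 1) (hy : y ∈ Icc (0:ℝ) 1) :
    ∃ ξ ∈ uIcc x y, |S.g k x - S.g k y| = |S.g' k ξ| * |x - y| := by
  have main : ∀ x ∈ Icc (0:ℝ) 1, ∀ y ∈ Icc (0:ℝ) 1, x < y →
      ∃ ξ ∈ uIcc x y, |S.g k x - S.g k y| = |S.g' k ξ| * |x - y| := by
    intro x hx y hy hxy
    obtain ⟨ξ, hξ, h⟩ := exists_hasDerivAt_eq_slope (S.g k) (S.g' k) hxy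
      (fun z hz => (S.deriv1 k hk z ⟨hx.1.trans hz.1, hz.2.trans hy.2⟩).continuousAt.continuousWithinAt)
      (fun z hz => S.deriv1 k hk z ⟨hx.1.trans hz.1.le, hz.2.le.trans hy.2⟩)
    refine ⟨ξ, by rw [uIcc_of_le hxy.le]; exact Ioo_subset_Icc_self hξ, ?_⟩
    have : y - x ≠ 0 := by linarith
    rw [h, abs_div, abs_sub_comm x y, div_mul_cancel₀ _ (abs_ne_zero.2 this), abs_sub_comm]
  rcases lt_trichotomy x y with h | h | h
  · exact main x hx y hy h
  · subst h; exact ⟨x, by simp, by simp⟩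
  · obtain ⟨ξ, h1, h2⟩ := main y hy x hx h
    exact ⟨ξ, by rwa [uIcc_comm], by rw [abs_sub_comm, h2, abs_sub_comm y x]⟩

lemma uIcc_sub' {x y : ℝ} (hx : x ∈ Icc (0:ℝ) 1) (hy : y ∈ Icc (0:ℝ) 1) : uIcc x y ⊆ Icc (0:ℝ) 1 :=
  Set.uIcc_subset_Icc hx hy

lemma ratio {c : ℝ} (hc : ∀ n, 1 ≤ n → ∀ x ∈ Set.Icc (0 : ℝ) 1, |S.g'' n x / S.g' n x| < c)
    {k : ℕ} (hk : 1 ≤ k) {x y : ℝ} (hx : x ∈ Icc (0:ℝ) 1) (hy : y ∈ Icc (0:ℝ) 1) :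
    |S.g' k x| ≤ Real.exp (c * |x - y|) * |S.g' k y| := by
  have h := (convex_Icc (0:ℝ) 1).norm_image_sub_le_of_norm_hasDerivWithin_le
    (f := fun z => Real.log (S.g' k z)) (f' := fun z => S.g'' k z / S.g' k z) (C := c)
    (fun z hz => ((S.deriv2 k hk z hz).log (S.deriv_ne k hk z hz)).hasDerivWithinAt)
    (fun z hz => (hc k hk z hz).le) hy hx
  rw [Real.norm_eq_abs, Real.norm_eq_abs] at h
  have h2 : Real.log (S.g' k x) ≤ c * |x - y| + Real.log (S.g' k y) := by
    linarith [(abs_le.1 h).2]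
  have h3 := Real.exp_le_exp.2 h2
  rwa [Real.exp_add, Real.exp_log_eq_abs (S.deriv_ne k hk x hx),
    Real.exp_log_eq_abs (S.deriv_ne k hk y hy)] at h3

lemma g_bdist {c : ℝ} (hc0 : 0 < c)
    (hc : ∀ n, 1 ≤ n → ∀ x ∈ Set.Icc (0 : ℝ) 1, |S.g'' n x / S.g' n x| < c)
    {k : ℕ} (hk : 1 ≤ k) {A : Set ℝ} (hA : A ⊆ Icc 0 1) {δ : ℝ}
    (hδ : ∀ x ∈ A, ∀ y ∈ A, |x - y| ≤ δ) : bdist (S.g k) A (Real.exp (c * δ)) := by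
  intro x hx y hy x' hx' y' hy'
  obtain ⟨ξ, h1, h2⟩ := S.slope hk (hA hx) (hA hy)
  obtain ⟨η, h3, h4⟩ := S.slope hk (hA hx') (hA hy')
  rw [h2, h4]
  have hr := S.ratio hc hk (uIcc_sub' (hA hx) (hA hy) h1) (uIcc_sub' (hA hx') (hA hy') h3)
  have hd : |ξ - η| ≤ δ := by
    rw [mem_uIcc] at h1 h3
    have a1 := abs_le.1 (hδ x hx x' hx')
    have a2 := abs_le.1 (hδ x hx y' hy')
    have a3 := abs_le.1 (hδ y hy x' hx')
    have a4 := abs_le.1 (hδ y hy y' hy')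
    rw [abs_le]
    rcases h1 with h1 | h1 <;> rcases h3 with h3 | h3 <;> constructor <;> linarith
  have hr2 : |S.g' k ξ| ≤ Real.exp (c * δ) * |S.g' k η| := by
    refine hr.trans ?_
    gcongr
  calc _ = |S.g' k ξ| * (|x - y| * |x' - y'|) := by ring
    _ ≤ (Real.exp (c * δ) * |S.g' k η|) * (|x - y| * |x' - y'|) := by gcongr
    _ = _ := by ring

lemma g_bdist' {c : ℝ} (hc0 : 0 < c)
    (hc : ∀ n, 1 ≤ n → ∀ x ∈ Set.Icc (0 : ℝ) 1, |S.g'' n x / S.g' n x| < c)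
    {k : ℕ} (hk : 1 ≤ k) : bdist (S.g k) (Icc 0 1) (distortion (S.g' k)) := by
  have hb : ∀ x ∈ Icc (0:ℝ) 1, ∀ y ∈ Icc (0:ℝ) 1, |S.g' k y| / |S.g' k x| ≤ Real.exp c := by
    intro x hx y hy
    rw [div_le_iff₀ (abs_pos.2 (S.deriv_ne k hk x hx))]
    refine (S.ratio hc hk hy hx).trans ?_
    gcongr
    have : |y - x| ≤ 1 := by
      rw [abs_le]; constructor <;> linarith [hx.1, hx.2, hy.1, hy.2]
    nlinarith
  have e0 : 0 ≤ Real.exp c := (Real.exp_pos c).le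
  have l1 : ∀ x ∈ Icc (0:ℝ) 1, ∀ y, (⨆ (_ : y ∈ Icc (0:ℝ) 1), |S.g' k y| / |S.g' k x|) ≤ Real.exp c :=
    fun x hx y => Real.iSup_le (fun hy => hb x hx y hy) e0
  have l2 : ∀ x, (⨆ (_ : x ∈ Icc (0:ℝ) 1), ⨆ y ∈ Icc (0:ℝ) 1, |S.g' k y| / |S.g' k x|) ≤ Real.exp c :=
    fun x => Real.iSup_le (fun hx => Real.iSup_le (fun y => l1 x hx y) e0) e0
  have hdis : ∀ x ∈ Icc (0:ℝ) 1, ∀ y ∈ Icc (0:ℝ) 1,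
      |S.g' k y| / |S.g' k x| ≤ distortion (S.g' k) := by
    intro x hx y hy
    have s1 : |S.g' k y| / |S.g' k x| = ⨆ (_ : y ∈ Icc (0:ℝ) 1), |S.g' k y| / |S.g' k x| :=
      by rw [ciSup_pos hy]
    have s2 : (⨆ (_ : y ∈ Icc (0:ℝ) 1), |S.g' k y| / |S.g' k x|) ≤
        ⨆ y ∈ Icc (0:ℝ) 1, |S.g' k y| / |S.g' k x| :=
      le_ciSup (f := fun y => ⨆ (_ : y ∈ Icc (0:ℝ) 1), |S.g' k y| / |S.g' k x|)
        ⟨_, by rintro _ ⟨y, rfl⟩; exact l1 x hx y⟩ y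
    have s3 : (⨆ y ∈ Icc (0:ℝ) 1, |S.g' k y| / |S.g' k x|) =
      ⨆ (_ : x ∈ Icc (0:ℝ) 1), ⨆ y ∈ Icc (0:ℝ) 1, |S.g' k y| / |S.g' k x| := by
      rw [ciSup_pos hx]
    have s4 := le_ciSup (f := fun x => ⨆ (_ : x ∈ Icc (0:ℝ) 1), ⨆ y ∈ Icc (0:ℝ) 1,
      |S.g' k y| / |S.g' k x|) ⟨_, by rintro _ ⟨y, rfl⟩; exact l2 y⟩ x
    rw [s1]
    refine s2.trans ?_
    rw [s3]
    exact s4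
  intro x hx y hy x' hx' y' hy'
  obtain ⟨ξ, h1, h2⟩ := S.slope hk hx hy
  obtain ⟨η, h3, h4⟩ := S.slope hk hx' hy'
  have hξ := uIcc_sub' hx hy h1
  have hη := uIcc_sub' hx' hy' h3
  rw [h2, h4]
  have := hdis η hη ξ hξ
  rw [div_le_iff₀ (abs_pos.2 (S.deriv_ne k hk η hη))] at this
  calc _ = |S.g' k ξ| * (|x - y| * |x' - y'|) := by ring
    _ ≤ (distortion (S.g' k) * |S.g' k η|) * (|x - y| * |x' - y'|) := by gcongr
    _ = _ := by ring

lemma word_lip {α : ℝ} (hα0 : 0 ≤ α)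
    (hα : ∀ n, 1 ≤ n → ∀ x ∈ Set.Icc (0 : ℝ) 1, |S.g' n x| < α)
    (w : List ℕ) (hw : ∀ i ∈ w, 1 ≤ i) {x y : ℝ} (hx : x ∈ Icc (0:ℝ) 1) (hy : y ∈ Icc (0:ℝ) 1) :
    |wordComp S.g w x - wordComp S.g w y| ≤ α ^ w.length * |x - y| := by
  induction w with
  | nil => simp [wordComp]
  | cons k w ih =>
    have h' : ∀ i ∈ w, 1 ≤ i := fun i hi => hw i (by simp [hi])
    have hk := hw k (by simp)
    have m1 := S.word_maps w h' hx
    have m2 := S.word_maps w h' hy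
    obtain ⟨ξ, h1, h2⟩ := S.slope hk m1 m2
    simp only [wordComp, Function.comp, List.length_cons]
    rw [h2, pow_succ']
    have := (hα k hk ξ (uIcc_sub' m1 m2 h1)).le
    calc _ ≤ α * (α ^ w.length * |x - y|) :=
          mul_le_mul this (ih h') (abs_nonneg _) hα0
      _ = _ := by ring

lemma word_bdist {α c : ℝ} (hα0 : 0 ≤ α) 
    (hα : ∀ n, 1 ≤ n → ∀ x ∈ Set.Icc (0 : ℝ) 1, |S.g' n x| < α) (hc0 : 0 < c)
    (hc : ∀ n, 1 ≤ n → ∀ x ∈ Set.Icc (0 : ℝ) 1, |S.g'' n x / S.g' n x| < c)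
    (w : List ℕ) (hw : ∀ i ∈ w, 1 ≤ i) {A : Set ℝ} (hA : A ⊆ Icc 0 1) {δ : ℝ} 
    (hδ : ∀ x ∈ A, ∀ y ∈ A, |x - y| ≤ δ) :
    bdist (wordComp S.g w) A (Real.exp (c * (δ * ∑ i ∈ Finset.range w.length, α ^ i))) := by
  induction w with
  | nil =>
    intro x _ y _ x' _ y' _
    simp [wordComp, mul_comm]
  | cons k w ih =>
    have h' : ∀ i ∈ w, 1 ≤ i := fun i hi => hw i (by simp [hi])
    have hk := hw k (by simp)
    have hb : bdist (S.g k) (wordComp S.g w '' A) (Real.exp (c * (α ^ w.length * δ))) := by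
      refine S.g_bdist hc0 hc hk ?_ ?_
      · rintro _ ⟨x, hx, rfl⟩; exact S.word_maps w h' (hA hx)
      · rintro _ ⟨x, hx, rfl⟩ _ ⟨y, hy, rfl⟩
        refine (S.word_lip hα0 hα w h' (hA hx) (hA hy)).trans ?_
        gcongr
        exact hδ x hx y hy
    have := bdist_comp (Real.exp_pos _).le ((S.word_inj w h').mono hA) hb (ih h')
    rw [← Real.exp_add] at this
    simp only [wordComp, List.length_cons, Finset.sum_range_succ]
    convert this using 2
    ring

/-- big last letter gives small distortion -/
lemma exists_big {κ : ℝ} (hκ : 1 < κ) : ∃ N, 1 ≤ N ∧ ∀ (v : List ℕ) (k : ℕ), (∀ i ∈ v, 1 ≤ i) →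
    N ≤ k → bdist (wordComp S.g (v ++ [k])) (Icc 0 1) κ := by
  obtain ⟨α, hα1, hα⟩ := S.N5
  obtain ⟨c, hc0, hc⟩ := S.N3
  have hα0 : 0 ≤ α := (abs_nonneg _).trans (hα 1 le_rfl 0 (by simp)).le
  have hlim : Tendsto (fun k => Real.exp (c * ((S.b (k-1) - S.b k) * (1 - α)⁻¹)) * distortion (S.g' k))
      atTop (𝓝 1) := by
    have h1 : Tendsto (fun k => S.b (k-1)) atTop (𝓝 0) := S.b_lim.comp (tendsto_sub_atTop_nat 1)
    have h2 := (((h1.sub S.b_lim).mul_const (1 - α)⁻¹).const_mul c)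
    have h3 := ((Real.continuous_exp.tendsto _).comp h2).mul S.N4
    simpa using h3
  have hev := (hlim.eventually (gt_mem_nhds hκ)).and (eventually_ge_atTop 1)
  obtain ⟨N, hN⟩ := eventually_atTop.1 hev
  refine ⟨max N 1, le_max_right _ _, fun v k hv hk => ?_⟩
  obtain ⟨hk2, hk1⟩ := hN k ((le_max_left _ _).trans hk)
  rw [wordComp_append]
  have e : wordComp S.g [k] = S.g k := rfl
  rw [e]
  have hδ : ∀ x ∈ S.g k '' Icc 0 1, ∀ y ∈ S.g k '' Icc 0 1, |x - y| ≤ S.b (k-1) - S.b k := by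
    rw [S.g_image k hk1]
    intro x hx y hy
    rw [abs_le]; constructor <;> linarith [hx.1, hx.2, hy.1, hy.2]
  have h1 := S.word_bdist hα0 hα hc0 hc v hv (S.g_maps hk1).image_subset hδ
  have h2 := bdist_comp (Real.exp_pos _).le (S.g_anti k hk1).injOn h1 (S.g_bdist' hc0 hc hk1)
  intro x hx y hy x' hx' y' hy'
  refine (h2 x hx y hy x' hx' y' hy').trans ?_
  refine mul_le_mul_of_nonneg_right (le_trans ?_ hk2.le) (by positivity)
  have hd0 : 0 ≤ distortion (S.g' k) := by
    unfold distortion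
    exact Real.iSup_nonneg fun _ => Real.iSup_nonneg fun _ => Real.iSup_nonneg fun _ =>
      Real.iSup_nonneg fun _ => by positivity
  have hbd : 0 ≤ S.b (k-1) - S.b k := sub_nonneg.2 (S.b_anti.antitone (Nat.sub_le k 1))
  refine mul_le_mul_of_nonneg_right (Real.exp_le_exp.2 ?_) hd0
  refine mul_le_mul_of_nonneg_left (mul_le_mul_of_nonneg_left ?_ hbd) hc0.le
  rw [← tsum_geometric_of_lt_one hα0 hα1]
  exact (summable_geometric_of_lt_one hα0 hα1).sum_le_tsum _ (fun i _ => pow_nonneg hα0 i)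

def D (w : List ℕ) : ℝ := |wordComp S.g w 1 - wordComp S.g w 0|

lemma D_pos (w : List ℕ) (hw : ∀ i ∈ w, 1 ≤ i) : 0 < S.D w := by
  refine abs_pos.2 (sub_ne_zero.2 (fun h => ?_))
  have := S.word_inj w hw (by simp) (by simp) h
  norm_num at this

lemma word_cont (w : List ℕ) (hw : ∀ i ∈ w, 1 ≤ i) : ContinuousOn (wordComp S.g w) (Icc 0 1) := by
  induction w with
  | nil => exact continuousOn_id
  | cons k w ih =>
    have h' : ∀ i ∈ w, 1 ≤ i := fun i hi => hw i (by simp [hi])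
    exact ContinuousOn.comp (fun z hz => (S.deriv1 k (hw k (by simp)) z hz).continuousAt.continuousWithinAt)
      (ih h') (S.word_maps w h')

def K (n : ℕ) : Set ℝ := Icc (S.b n) (S.g 1 (S.b n))

lemma K_sub (n : ℕ) : S.K n ⊆ Ioo 0 1 := by
  intro x hx
  refine ⟨(S.b_pos n).trans_le hx.1, hx.2.trans_lt ?_⟩
  have := S.g_anti 1 le_rfl (a := 0) (b := S.b n) (by simp) ⟨(S.b_pos n).le, S.b_le_one n⟩ (S.b_pos n)
  rwa [S.g_zero 1 le_rfl, Nat.sub_self, S.b_zero] at this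

lemma K_sub' (n : ℕ) : S.K n ⊆ Icc 0 1 := (S.K_sub n).trans Ioo_subset_Icc_self

lemma b1_le (n : ℕ) : S.b 1 ≤ S.g 1 (S.b n) :=
  (S.g_mem le_rfl ⟨(S.b_pos n).le, S.b_le_one n⟩).1

lemma K_ne {n : ℕ} (hn : 1 ≤ n) : (S.K n).Nonempty :=
  nonempty_Icc.2 ((S.b_anti.antitone hn).trans (S.b1_le n))

lemma K_maps {n k : ℕ} (hk : 1 ≤ k) (hkn : k ≤ n) : MapsTo (S.g k) (S.K n) (S.K n) := by
  intro x hx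
  have hx' := S.K_sub' n hx
  have hm := S.g_mem hk hx'
  refine ⟨(S.b_anti.antitone hkn).trans hm.1, ?_⟩
  rcases hk.eq_or_lt with rfl | h2
  · exact (S.g_anti 1 le_rfl).antitoneOn ⟨(S.b_pos n).le, S.b_le_one n⟩ hx' hx.1
  · exact hm.2.trans ((S.b_anti.antitone (by omega)).trans (S.b1_le n))

lemma K_word {n : ℕ} (w : List ℕ) (hw : ∀ i ∈ w, 1 ≤ i ∧ i ≤ n) :
    MapsTo (wordComp S.g w) (S.K n) (S.K n) := by
  induction w with
  | nil => exact mapsTo_id _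
  | cons k w ih =>
    have hk := hw k (by simp)
    exact (S.K_maps hk.1 hk.2).comp (ih (fun i hi => hw i (by simp [hi])))

lemma g_Ioo {k : ℕ} (hk : 1 ≤ k) {x : ℝ} (hx : x ∈ Ioo (0:ℝ) 1) :
    S.b k < S.g k x ∧ S.g k x < S.b (k-1) := by
  have hx' := Ioo_subset_Icc_self hx
  rw [← S.g_one k hk, ← S.g_zero k hk]
  exact ⟨S.g_anti k hk hx' (by simp) hx.2, S.g_anti k hk (by simp) hx' hx.1⟩

lemma word_disj {n : ℕ} (w w' : List ℕ) (hw : ∀ i ∈ w, 1 ≤ i ∧ i ≤ n)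
    (hw' : ∀ i ∈ w', 1 ≤ i ∧ i ≤ n) (h1 : ¬ w <+: w') (h2 : ¬ w' <+: w)
    {x y : ℝ} (hx : x ∈ S.K n) (hy : y ∈ S.K n) : wordComp S.g w x ≠ wordComp S.g w' y := by
  induction w generalizing w' with
  | nil => simp at h1
  | cons k w ih =>
    cases w' with
    | nil => simp at h2
    | cons k' w' =>
      have hk := hw k (by simp)
      have hk' := hw' k' (by simp)
      have a : ∀ i ∈ w, 1 ≤ i ∧ i ≤ n := fun i hi => hw i (by simp [hi])
      have a' : ∀ i ∈ w', 1 ≤ i ∧ i ≤ n := fun i hi => hw' i (by simp [hi])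
      have m := S.K_word w a hx
      have m' := S.K_word w' a' hy
      simp only [wordComp, Function.comp]
      rcases lt_trichotomy k k' with h | h | h
      · have e1 := S.g_Ioo hk.1 (S.K_sub n m)
        have e2 := S.g_Ioo hk'.1 (S.K_sub n m')
        have := S.b_anti.antitone (show k ≤ k' - 1 by omega)
        intro e; linarith
      · subst h
        intro e
        have := (S.g_anti k hk.1).injOn (S.K_sub' n m) (S.K_sub' n m') e
        refine ih w' a a' ?_ ?_ this
        · intro h; exact h1 (by simpa using h)
        · intro h; exact h2 (by simpa using h)
      · have e1 := S.g_Ioo hk.1 (S.K_sub n m)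
        have e2 := S.g_Ioo hk'.1 (S.K_sub n m')
        have := S.b_anti.antitone (show k' ≤ k - 1 by omega)
        intro e; linarith

lemma sum_bound {n N : ℕ} (hn : 1 ≤ n) {κ h : ℝ} (hκ : 1 < κ) (hh : 0 < h)
    (hN : ∀ (v : List ℕ) (k : ℕ), (∀ i ∈ v, 1 ≤ i) →
      N ≤ k → bdist (wordComp S.g (v ++ [k])) (Icc 0 1) κ)
    (hdim : dimH (limitSet S.g n) = ENNReal.ofReal h)
    (F : Finset (List ℕ)) (hF : ∀ w ∈ F, ∀ i ∈ w, 1 ≤ i ∧ i ≤ n)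
    (hFl : ∀ w ∈ F, ∃ v k, w = v ++ [k] ∧ N ≤ k)
    (hFp : ∀ w ∈ F, ∀ w' ∈ F, w <+: w' → w = w') :
    ∑ w ∈ F, S.D w ^ h ≤ κ ^ h := by
  by_contra hcon
  push Not at hcon
  obtain ⟨α, hα1, hα⟩ := S.N5
  have hα0 : 0 ≤ α := (abs_nonneg _).trans (hα 1 le_rfl 0 (by simp)).le
  have hκ0 : 0 < κ := by linarith
  have hDp : ∀ w ∈ F, 0 < S.D w := fun w hw => S.D_pos w (fun i hi => (hF w hw i hi).1)
  obtain ⟨t, hth, ht⟩ : ∃ t, h < t ∧ κ ^ t < ∑ w ∈ F, S.D w ^ t := by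
    have c1 : ContinuousAt (fun t : ℝ => κ ^ t) h := Real.continuousAt_const_rpow hκ0.ne'
    have c2 : ContinuousAt (fun t : ℝ => ∑ w ∈ F, S.D w ^ t) h :=
      tendsto_finsetSum _ (fun w hw => Real.continuousAt_const_rpow (hDp w hw).ne')
    have := (c1.tendsto.eventually_lt c2.tendsto hcon)
    have h2 : ∀ᶠ t in 𝓝[>] h, κ ^ t < ∑ w ∈ F, S.D w ^ t := nhdsWithin_le_nhds this
    obtain ⟨t, a, b⟩ := (h2.and self_mem_nhdsWithin).exists
    exact ⟨t, b, a⟩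
  have ht0 : 0 < t := hh.trans hth
  set Z := ∑ w ∈ F, S.D w ^ t with hZ
  have hκt : 0 < κ ^ t := Real.rpow_pos_of_pos hκ0 t
  have hZ0 : 0 < Z := hκt.trans ht
  let fl : List {w // w ∈ F} → List ℕ := fun u => (u.map Subtype.val).flatten
  have fla : ∀ u v, fl (u ++ v) = fl u ++ fl v := fun u v => by simp [fl]
  have fl1 : ∀ w, fl [w] = w.1 := fun w => by simp [fl]
  have flW : ∀ u, ∀ i ∈ fl u, 1 ≤ i ∧ i ≤ n := by
    intro u i hi
    simp only [fl, List.mem_flatten, List.mem_map] at hi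
    obtain ⟨l, ⟨w, _, rfl⟩, hi⟩ := hi
    exact hF w.1 w.2 i hi
  have flW1 : ∀ u, ∀ i ∈ fl u, 1 ≤ i := fun u i hi => (flW u i hi).1
  have fll : ∀ u, u.length ≤ (fl u).length := by
    intro u
    induction u with
    | nil => simp
    | cons w u ih =>
      have : fl (w :: u) = w.1 ++ fl u := by simp [fl]
      rw [this, List.length_append, List.length_cons]
      obtain ⟨v, k, h, _⟩ := hFl w.1 w.2
      have : 1 ≤ w.1.length := by rw [h]; simp
      omega
  have flb : ∀ u, bdist (wordComp S.g (fl u)) (Icc 0 1) κ := by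
    intro u
    rcases List.eq_nil_or_concat u with rfl | ⟨u', w, rfl⟩
    · intro x _ y _ x' _ y' _
      simp only [fl, List.map_nil, List.flatten_nil, wordComp, id]
      have : 0 ≤ |x' - y'| * |x - y| := by positivity
      nlinarith
    · obtain ⟨v, k, h, hk⟩ := hFl w.1 w.2
      have e : fl (u' ++ [w]) = (fl u' ++ v) ++ [k] := by rw [fla, fl1, h, List.append_assoc]
      rw [List.concat_eq_append, e]
      refine hN _ k (fun i hi => ?_) hk
      refine flW1 (u' ++ [w]) i ?_
      rw [e]; exact List.mem_append_left _ hi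
  let p : {w // w ∈ F} → ℝ := fun w => S.D w.1 ^ t / Z
  have hp0 : ∀ w, 0 ≤ p w := fun w => div_nonneg (Real.rpow_nonneg (hDp _ w.2).le _) hZ0.le
  have hP : ∀ u, (u.map p).prod ≤ S.D (fl u) ^ t := by
    intro u
    induction u using List.reverseRecOn with
    | nil => simp [fl, D, wordComp]
    | append_singleton u w ih =>
      rw [List.map_append, List.prod_append, fla, fl1]
      simp only [List.map_cons, List.map_nil, List.prod_cons, List.prod_nil, mul_one]
      have hw1 : ∀ i ∈ w.1, 1 ≤ i := fun i hi => (hF w.1 w.2 i hi).1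
      have b1 := flb u 1 (by simp) 0 (by simp) _ (S.word_maps w.1 hw1 (x := 1) (by simp)) _
        (S.word_maps w.1 hw1 (x := 0) (by simp))
      have b2 : S.D (fl u) * S.D w.1 ≤ κ * S.D (fl u ++ w.1) := by
        simpa [D, wordComp_append] using b1
      have d0 := (S.D_pos (fl u) (flW1 u)).le
      have d1 := (hDp w.1 w.2).le
      have d2 : 0 ≤ S.D (fl u ++ w.1) := abs_nonneg _
      have b3 := Real.rpow_le_rpow (mul_nonneg d0 d1) b2 ht0.le
      rw [Real.mul_rpow d0 d1, Real.mul_rpow hκ0.le d2] at b3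
      calc (u.map p).prod * p w ≤ S.D (fl u) ^ t * p w := mul_le_mul_of_nonneg_right ih (hp0 w)
        _ = (S.D (fl u) ^ t * S.D w.1 ^ t) / Z := by simp only [p]; ring
        _ ≤ S.D (fl u ++ w.1) ^ t := by
          rw [div_le_iff₀ hZ0]
          have : 0 ≤ S.D (fl u ++ w.1) ^ t := Real.rpow_nonneg d2 _
          nlinarith
  have hlip : ∀ u, ∀ x ∈ Icc (0:ℝ) 1, ∀ y ∈ Icc (0:ℝ) 1,
      |wordComp S.g (fl u) x - wordComp S.g (fl u) y| ≤ α ^ u.length := by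
    intro u x hx y hy
    have hxy : |x - y| ≤ 1 := by
      rw [abs_le]; constructor <;> linarith [hx.1, hx.2, hy.1, hy.2]
    calc _ ≤ α ^ (fl u).length * |x - y| := S.word_lip hα0 hα (fl u) (flW1 u) hx hy
      _ ≤ α ^ (fl u).length * 1 := by gcongr
      _ = α ^ (fl u).length := mul_one _
      _ ≤ α ^ u.length := pow_le_pow_of_le_one hα0 hα1.le (fll u)
  have key := abs_dim (fun u => wordComp S.g (fl u)) p hp0 ?_ (S.K n) (S.K_ne hn) isCompact_Icc
    (fun u v => by rw [fla, wordComp_append]) ?_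
    (fun u => (S.word_cont _ (flW1 u)).mono (S.K_sub' n)) ?_ t (κ ^ t) α ht0 hκt hα0 hα1
    (fun u x hx y hy => hlip u x (S.K_sub' n hx) y (S.K_sub' n hy)) ?_ ?_ (limitSet S.g n) ?_
  · rw [hdim, ENNReal.ofReal_le_ofReal_iff hh.le] at key
    linarith
  · have : ∑ i : {w // w ∈ F}, p i = (∑ w ∈ F, S.D w ^ t) / Z := by
      rw [Finset.sum_div, ← Finset.sum_coe_sort F]
    rw [this, ← hZ, div_self hZ0.ne']
  · intro w
    rw [fl1]
    exact S.K_word _ (hF w.1 w.2)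
  · intro w w' hne
    rw [fl1, fl1, Set.disjoint_left]
    rintro _ ⟨x, hx, rfl⟩ ⟨y, hy, e⟩
    refine S.word_disj w'.1 w.1 (hF _ w'.2) (hF _ w.2) ?_ ?_ hy hx e
    · intro h; exact hne (Subtype.ext (hFp _ w'.2 _ w.2 h).symm)
    · intro h; exact hne (Subtype.ext (hFp _ w.2 _ w'.2 h))
  · intro u x hx y hy
    have b1 := flb u 1 (by simp) 0 (by simp) x (S.K_sub' n hx) y (S.K_sub' n hy)
    have b2 : S.D (fl u) * |x - y| ≤ κ * |wordComp S.g (fl u) x - wordComp S.g (fl u) y| := by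
      simpa [D] using b1
    have d0 := (S.D_pos (fl u) (flW1 u)).le
    have b3 := Real.rpow_le_rpow (mul_nonneg d0 (abs_nonneg _)) b2 ht0.le
    rw [Real.mul_rpow d0 (abs_nonneg _), Real.mul_rpow hκ0.le (abs_nonneg _)] at b3
    exact (mul_le_mul_of_nonneg_right (hP u) (by positivity)).trans b3
  · intro u
    exact (hP u).trans (Real.rpow_le_rpow (abs_nonneg _) (hlip u 1 (by simp) 0 (by simp)) ht0.le)
  · intro x hx
    unfold limitSet
    rw [mem_iInter]
    intro l
    obtain ⟨u, hu, y, hy, rfl⟩ := hx (l+1)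
    simp only [mem_iUnion]
    refine ⟨(fl u).take (l+1), ⟨?_, fun i hi => flW u i (List.mem_of_mem_take hi)⟩,
      wordComp S.g ((fl u).drop (l+1)) y, ?_, ?_⟩
    · have := fll u
      rw [List.length_take]; omega
    · exact S.word_maps _ (fun i hi => flW1 u i (List.mem_of_mem_drop hi)) (S.K_sub' n hy)
    · have := wordComp_append S.g ((fl u).take (l+1)) ((fl u).drop (l+1))
      rw [List.take_append_drop] at this
      rw [this]; rfl

lemma mem_limitSet {n : ℕ} {x : ℝ} : x ∈ limitSet S.g n ↔
    ∀ l : ℕ, ∃ w : List ℕ, w.length = l + 1 ∧ (∀ i ∈ w, 1 ≤ i ∧ i ≤ n) ∧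
      ∃ y ∈ Icc (0:ℝ) 1, wordComp S.g w y = x := by
  simp only [limitSet, mem_iInter, mem_iUnion, mem_image, mem_setOf_eq, exists_prop, and_assoc]

lemma limitSet_sub (n : ℕ) : limitSet S.g n ⊆ Icc 0 1 := by
  intro x hx
  obtain ⟨w, _, hw, y, hy, rfl⟩ := S.mem_limitSet.1 hx 0
  exact S.word_maps w (fun i hi => (hw i hi).1) hy

lemma limitSet_mono {m n : ℕ} (h : m ≤ n) : limitSet S.g m ⊆ limitSet S.g n := by
  intro x hx
  rw [S.mem_limitSet] at hx ⊢
  intro l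
  obtain ⟨w, h1, h2, h3⟩ := hx l
  exact ⟨w, h1, fun i hi => ⟨(h2 i hi).1, (h2 i hi).2.trans h⟩, h3⟩

lemma J_step {n : ℕ} {x : ℝ} (hx : x ∈ limitSet S.g n) :
    ∃ k, 1 ≤ k ∧ k ≤ n ∧ ∃ y ∈ limitSet S.g n, S.g k y = x := by
  by_contra hcon
  push Not at hcon
  let E : ℕ → Set ℝ := fun l => {x | ∃ w : List ℕ, w.length = l + 1 ∧ (∀ i ∈ w, 1 ≤ i ∧ i ≤ n) ∧
      ∃ y ∈ Icc (0:ℝ) 1, wordComp S.g w y = x}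
  have hEs : ∀ l, E l ⊆ Icc 0 1 := by
    rintro l _ ⟨w, _, hw, y, hy, rfl⟩
    exact S.word_maps w (fun i hi => (hw i hi).1) hy
  have hEm : ∀ l l', l ≤ l' → E l' ⊆ E l := by
    rintro l l' hl _ ⟨w, h1, hw, y, hy, rfl⟩
    refine ⟨w.take (l+1), by rw [List.length_take]; omega,
      fun i hi => hw i (List.mem_of_mem_take hi), wordComp S.g (w.drop (l+1)) y,
      S.word_maps _ (fun i hi => (hw i (List.mem_of_mem_drop hi)).1) hy, ?_⟩
    have := wordComp_append S.g (w.take (l+1)) (w.drop (l+1))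
    rw [List.take_append_drop] at this
    rw [this]; rfl
  have h1 : ∀ k, ∃ l, 1 ≤ k → k ≤ n → ∀ y ∈ E l, S.g k y ≠ x := by
    intro k
    by_contra h
    push Not at h
    obtain ⟨hk1, hkn, y0, hy0, e0⟩ := h 0
    refine hcon k hk1 hkn y0 (S.mem_limitSet.2 fun l => ?_) e0
    obtain ⟨_, _, y, hy, e⟩ := h l
    have : y = y0 := (S.g_anti k hk1).injOn (hEs _ hy) (hEs _ hy0) (e.trans e0.symm)
    rw [← this]; exact hy
  choose lk hlk using h1
  set L := (Finset.range (n+1)).sup lk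
  obtain ⟨w, hl, hw, z, hz, e⟩ := S.mem_limitSet.1 hx (L+1)
  cases w with
  | nil => simp at hl
  | cons k w =>
    have hk := hw k (by simp)
    refine hlk k hk.1 hk.2 (wordComp S.g w z) ?_ e
    refine hEm _ L (Finset.le_sup (f := lk) (Finset.mem_range.2 (by omega))) ?_
    exact ⟨w, by simpa using hl, fun i hi => hw i (by simp [hi]), z, hz, rfl⟩

lemma code {n : ℕ} {x : ℝ} (hx : x ∈ limitSet S.g n) : ∃ (k : ℕ → ℕ) (y : ℕ → ℝ), y 0 = x ∧
    ∀ j, 1 ≤ k j ∧ k j ≤ n ∧ y j ∈ limitSet S.g n ∧ S.g (k j) (y (j+1)) = y j := by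
  have h : ∀ z : limitSet S.g n, ∃ (k : ℕ) (y : limitSet S.g n), 1 ≤ k ∧ k ≤ n ∧ S.g k y = z := by
    intro z
    obtain ⟨k, h1, h2, y, hy, e⟩ := S.J_step z.2
    exact ⟨k, ⟨y, hy⟩, h1, h2, e⟩
  choose kf yf h1 h2 h3 using h
  let Y : ℕ → limitSet S.g n := fun j => Nat.rec ⟨x, hx⟩ (fun _ z => yf z) j
  exact ⟨fun j => kf (Y j), fun j => (Y j).1, rfl, fun j => ⟨h1 _, h2 _, (Y j).2, h3 (Y j)⟩⟩

lemma code_word (k : ℕ → ℕ) (y : ℕ → ℝ) (h : ∀ j, S.g (k j) (y (j+1)) = y j) (a m : ℕ) :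
    wordComp S.g (preW (fun i => k (a + i)) m) (y (a + m)) = y a := by
  induction m with
  | zero => simp [preW, wordComp]
  | succ m ih =>
    rw [preW_succ, wordComp_append]
    simp only [Function.comp, wordComp, id]
    rw [← add_assoc, h, ih]

lemma preW_add {F : Type} (k : ℕ → F) (a m : ℕ) :
    preW k (a + m) = preW k a ++ preW (fun i => k (a + i)) m := by
  induction m with
  | zero => simp [preW]
  | succ m ih => rw [← add_assoc, preW_succ, ih, preW_succ, List.append_assoc]

lemma mem_preW {F : Type} {k : ℕ → F} {m : ℕ} {i : F} (h : i ∈ preW k m) : ∃ j < m, k j = i := by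
  simp only [preW, List.mem_ofFn] at h
  obtain ⟨j, hj⟩ := h
  exact ⟨j, j.2, hj⟩

def V (n N l : ℕ) : Set (List ℕ) := {w | (∀ i ∈ w, 1 ≤ i ∧ i ≤ n) ∧
  ∃ v z k, w = v ++ (z ++ [k]) ∧ v.length = l ∧ (∀ i ∈ z, i < N) ∧ N ≤ k}

lemma prefix_aux {N : ℕ} (z z' : List ℕ) (k k' : ℕ) (hz : ∀ i ∈ z, i < N) (hz' : ∀ i ∈ z', i < N)
    (hk : N ≤ k) (hk' : N ≤ k') (h : z ++ [k] <+: z' ++ [k']) : z ++ [k] = z' ++ [k'] := by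
  induction z generalizing z' with
  | nil =>
    cases z' with
    | nil => simpa using h
    | cons a z' =>
      have : k = a := by simpa using h
      have := hz' a (by simp)
      omega
  | cons a z ih =>
    cases z' with
    | nil =>
      have h' : a = k' := by
        have := List.cons_prefix_cons.1 h
        exact this.1
      have := hz a (by simp)
      omega
    | cons a' z' =>
      have := List.cons_prefix_cons.1 h
      simp only [List.cons_append]
      rw [this.1, ih z' (fun i hi => hz i (by simp [hi])) (fun i hi => hz' i (by simp [hi])) this.2]

lemma V_prefix {n N l : ℕ} {w w' : List ℕ} (hw : w ∈ V n N l) (hw' : w' ∈ V n N l)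
    (h : w <+: w') : w = w' := by
  obtain ⟨_, v, z, k, rfl, hv, hz, hk⟩ := hw
  obtain ⟨_, v', z', k', rfl, hv', hz', hk'⟩ := hw'
  obtain ⟨s, hs⟩ := h
  rw [List.append_assoc] at hs
  obtain ⟨e1, e2⟩ := List.append_inj hs (hv.trans hv'.symm)
  rw [e1, prefix_aux z z' k k' hz hz' hk hk' ⟨s, e2⟩]

lemma cover {n N l : ℕ} {x : ℝ} (hx : x ∈ limitSet S.g n) :
    (∃ v : List ℕ, (∀ i ∈ v, 1 ≤ i) ∧ x ∈ wordComp S.g v '' limitSet S.g (N-1)) ∨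
    ∃ w ∈ V n N l, x ∈ wordComp S.g w '' Icc 0 1 := by
  obtain ⟨k, y, rfl, h⟩ := S.code hx
  have hg : ∀ j, S.g (k j) (y (j+1)) = y j := fun j => (h j).2.2.2
  have hc0 : ∀ m, wordComp S.g (preW k m) (y m) = y 0 := by
    intro m
    simpa using S.code_word k y hg 0 m
  by_cases hb : ∃ j, N ≤ k (l + j)
  · right
    classical
    have hj := Nat.find_spec hb
    have hmin : ∀ i < Nat.find hb, k (l + i) < N := fun i hi => by
      have := Nat.find_min hb hi; omega
    generalize Nat.find hb = j at hj hmin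
    refine ⟨preW k (l + (j + 1)), ⟨?_, preW k l, preW (fun i => k (l + i)) j, k (l + j), ?_,
      preW_length _ _, ?_, hj⟩, y (l + (j+1)), S.limitSet_sub n (h _).2.2.1, hc0 _⟩
    · intro i hi
      obtain ⟨m, _, rfl⟩ := mem_preW hi
      exact ⟨(h m).1, (h m).2.1⟩
    · rw [preW_add, preW_succ]
    · intro i hi
      obtain ⟨m, hm, rfl⟩ := mem_preW hi
      exact hmin m hm
  · left
    push Not at hb
    refine ⟨preW k l, ?_, y l, S.mem_limitSet.2 fun m => ?_, hc0 l⟩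
    · intro i hi
      obtain ⟨m, _, rfl⟩ := mem_preW hi
      exact (h m).1
    · refine ⟨preW (fun i => k (l + i)) (m+1), preW_length _ _, ?_, y (l + (m+1)),
        S.limitSet_sub n (h _).2.2.1, S.code_word k y hg l (m+1)⟩
      intro i hi
      obtain ⟨m, _, rfl⟩ := mem_preW hi
      have := hb m
      exact ⟨(h _).1, by omega⟩

lemma meas_bound {n N : ℕ} (hn : 1 ≤ n) {κ h : ℝ} (hκ : 1 < κ) (hh : 0 < h)
    (hN : ∀ (v : List ℕ) (k : ℕ), (∀ i ∈ v, 1 ≤ i) →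
      N ≤ k → bdist (wordComp S.g (v ++ [k])) (Icc 0 1) κ)
    (hdim : dimH (limitSet S.g n) = ENNReal.ofReal h)
    (hnull : μH[h] (limitSet S.g (N-1)) = 0) :
    μH[h] (limitSet S.g n) ≤ ENNReal.ofReal (κ ^ h * κ ^ h) := by
  obtain ⟨α, hα1, hα⟩ := S.N5
  have hα0 : 0 ≤ α := (abs_nonneg _).trans (hα 1 le_rfl 0 (by simp)).le
  have hκ0 : 0 < κ := by linarith
  set Z : Set ℝ := ⋃ v ∈ {v : List ℕ | ∀ i ∈ v, 1 ≤ i}, wordComp S.g v '' limitSet S.g (N-1) with hZ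
  have hZ0 : μH[h] Z = 0 := by
    rw [hZ, measure_biUnion_null_iff (to_countable _)]
    intro v hv
    have hl : LipschitzOnWith 1 (wordComp S.g v) (limitSet S.g (N-1)) := by
      refine LipschitzOnWith.of_dist_le_mul fun x hx y hy => ?_
      rw [Real.dist_eq, Real.dist_eq]
      refine (S.word_lip hα0 hα v hv (S.limitSet_sub _ hx) (S.limitSet_sub _ hy)).trans ?_
      refine mul_le_mul_of_nonneg_right ?_ (abs_nonneg _)
      simpa using pow_le_one₀ hα0 hα1.le
    have := hl.hausdorffMeasure_image_le hh.le
    rw [hnull, mul_zero] at this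
    exact le_antisymm this zero_le
  have hV1 : ∀ l, ∀ w ∈ V n N l, ∀ i ∈ w, 1 ≤ i := fun l w hw i hi => (hw.1 i hi).1
  have hsum : ∀ l, ∑' w : V n N l, Metric.ediam (wordComp S.g w.1 '' Icc 0 1) ^ h ≤
      ENNReal.ofReal (κ ^ h * κ ^ h) := by
    intro l
    have hdiam : ∀ w : V n N l, Metric.ediam (wordComp S.g w.1 '' Icc 0 1) ^ h ≤
        ENNReal.ofReal (κ ^ h * S.D w.1 ^ h) := by
      intro w
      obtain ⟨_, v, z, k, e, _, _, hk⟩ := w.2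
      have hb : bdist (wordComp S.g w.1) (Icc 0 1) κ := by
        have e' : w.1 = (v ++ z) ++ [k] := by rw [e, List.append_assoc]
        rw [e']
        refine hN _ k (fun i hi => hV1 l w.1 w.2 i ?_) hk
        rw [e']; exact List.mem_append_left _ hi
      have hD : 0 ≤ S.D w.1 := abs_nonneg _
      rw [← Real.mul_rpow hκ0.le hD, ← ENNReal.ofReal_rpow_of_nonneg (mul_nonneg hκ0.le hD) hh.le]
      refine ENNReal.rpow_le_rpow (Metric.ediam_le ?_) hh.le
      rintro _ ⟨x, hx, rfl⟩ _ ⟨y, hy, rfl⟩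
      rw [edist_dist, Real.dist_eq]
      refine ENNReal.ofReal_le_ofReal ?_
      have b1 := hb x hx y hy 1 (by simp) 0 (by simp)
      have hxy : |x - y| ≤ 1 := by
        rw [abs_le]; constructor <;> linarith [hx.1, hx.2, hy.1, hy.2]
      have b2 : |wordComp S.g w.1 x - wordComp S.g w.1 y| ≤ κ * (S.D w.1 * |x - y|) := by
        simpa [D] using b1
      refine b2.trans (mul_le_mul_of_nonneg_left ?_ hκ0.le)
      exact mul_le_of_le_one_right hD hxy
    rw [ENNReal.tsum_eq_iSup_sum]
    refine iSup_le fun F => ?_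
    refine (Finset.sum_le_sum fun w _ => hdiam w).trans ?_
    rw [← ENNReal.ofReal_sum_of_nonneg (fun w _ => by
      have : 0 ≤ S.D w.1 := abs_nonneg _
      positivity)]
    refine ENNReal.ofReal_le_ofReal ?_
    rw [← Finset.mul_sum]
    refine mul_le_mul_of_nonneg_left ?_ (by positivity)
    have hmem : ∀ w ∈ F.map (Function.Embedding.subtype _), w ∈ V n N l := by
      intro w hw
      obtain ⟨a, _, rfl⟩ := Finset.mem_map.1 hw
      exact a.2
    have := S.sum_bound hn hκ hh hN hdim (F.map (Function.Embedding.subtype _))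
      (fun w hw => (hmem w hw).1)
      (fun w hw => by
        obtain ⟨_, v, z, k, e, _, _, hk⟩ := hmem w hw
        exact ⟨v ++ z, k, by rw [e, List.append_assoc], hk⟩)
      (fun w hw w' hw' h => V_prefix (hmem w hw) (hmem w' hw') h)
    rwa [Finset.sum_map] at this
  have hmain : μH[h] (limitSet S.g n \ Z) ≤ ENNReal.ofReal (κ ^ h * κ ^ h) := by
    have hr : Tendsto (fun l : ℕ => ENNReal.ofReal (α ^ l)) atTop (𝓝 0) := by
      rw [← ENNReal.ofReal_zero]
      exact ENNReal.tendsto_ofReal (tendsto_pow_atTop_nhds_zero_of_lt_one hα0 hα1)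
    refine (Measure.hausdorffMeasure_le_liminf_tsum (ι := fun l => V n N l) h _ _ hr
      (fun l w => wordComp S.g w.1 '' Icc 0 1) (Eventually.of_forall ?_)
      (Eventually.of_forall ?_)).trans ?_
    · intro l w
      refine Metric.ediam_le ?_
      rintro _ ⟨x, hx, rfl⟩ _ ⟨y, hy, rfl⟩
      rw [edist_dist, Real.dist_eq]
      refine ENNReal.ofReal_le_ofReal ?_
      refine (S.word_lip hα0 hα w.1 (hV1 l w.1 w.2) hx hy).trans ?_
      have hxy : |x - y| ≤ 1 := by
        rw [abs_le]; constructor <;> linarith [hx.1, hx.2, hy.1, hy.2]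
      refine (mul_le_of_le_one_right (pow_nonneg hα0 _) hxy).trans ?_
      refine pow_le_pow_of_le_one hα0 hα1.le ?_
      obtain ⟨_, v, z, k, e, hv, _⟩ := w.2
      rw [e, List.length_append, hv]; omega
    · rintro l x ⟨hx, hxZ⟩
      rcases S.cover (N := N) (l := l) hx with ⟨v, hv, hxv⟩ | ⟨w, hw, hxw⟩
      · exact absurd (mem_biUnion (show v ∈ {v : List ℕ | ∀ i ∈ v, 1 ≤ i} from hv) hxv) hxZ
      · exact mem_iUnion.2 ⟨⟨w, hw⟩, hxw⟩
    · refine (liminf_le_liminf (Eventually.of_forall hsum)).trans ?_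
      simp
  calc μH[h] (limitSet S.g n) ≤ μH[h] ((limitSet S.g n \ Z) ∪ Z) := by
        refine measure_mono ?_
        rw [diff_union_self]; exact subset_union_left
    _ ≤ μH[h] (limitSet S.g n \ Z) + μH[h] Z := measure_union_le _ _
    _ ≤ _ := by rw [hZ0, add_zero]; exact hmain

lemma h_le_one {n : ℕ} (hn : 1 ≤ n) : S.h n ≤ 1 := by
  have h1 := dimH_mono (subset_univ (limitSet S.g n))
  rw [Real.dimH_univ, S.h_dim n hn] at h1
  exact ENNReal.ofReal_le_one.1 h1

lemma h_tendsto : Tendsto S.h atTop (𝓝 1) := by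
  have hlog : Tendsto (fun n : ℕ => Real.log n) atTop atTop :=
    Real.tendsto_log_atTop.comp tendsto_natCast_atTop_atTop
  have h1 := S.N1.mul hlog.inv_tendsto_atTop
  rw [mul_zero] at h1
  have h2 : Tendsto (fun n => 1 - S.h n) atTop (𝓝 0) := by
    refine h1.congr' ?_
    filter_upwards [hlog.eventually_gt_atTop 0] with n hn
    simp only [Pi.inv_apply]
    field_simp
  simpa using h2.const_sub 1

end NonlinearIFS

/-- In the nonlinear setting, `limsup_{n→∞} H_{h_n}(J_n) ≤ 1`. -/
theorem nonlinear_limsup_hausdorff_measure_le_one (S : NonlinearIFS) :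
    Filter.limsup (fun n : ℕ => μH[S.h n] (limitSet S.g n)) Filter.atTop ≤ 1 := by
  by_cases hone : ∃ m, 1 ≤ m ∧ S.h m = 1
  · obtain ⟨m, hm, hm1⟩ := hone
    refine limsup_le_of_le (by isBoundedDefault) ?_
    filter_upwards [eventually_ge_atTop m] with n hn
    have hn1 : 1 ≤ n := hm.trans hn
    have h1 := dimH_mono (S.limitSet_mono hn)
    rw [S.h_dim m hm, S.h_dim n hn1, hm1, ENNReal.ofReal_one, ENNReal.one_le_ofReal] at h1
    have h2 : S.h n = 1 := le_antisymm (S.h_le_one hn1) h1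
    rw [h2, hausdorffMeasure_real]
    refine (measure_mono (S.limitSet_sub n)).trans ?_
    simp
  · push Not at hone
    have key : ∀ κ : ℝ, 1 < κ →
        limsup (fun n : ℕ => μH[S.h n] (limitSet S.g n)) atTop ≤ ENNReal.ofReal (κ * κ) := by
      intro κ hκ
      obtain ⟨N0, _, hN0⟩ := S.exists_big hκ
      set N := max N0 2
      have hN2 : 2 ≤ N := le_max_right _ _
      have hN : ∀ (v : List ℕ) (k : ℕ), (∀ i ∈ v, 1 ≤ i) →
          N ≤ k → bdist (wordComp S.g (v ++ [k])) (Icc 0 1) κ :=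
        fun v k hv hk => hN0 v k hv ((le_max_left _ _).trans hk)
      have hlt : S.h (N-1) < 1 :=
        lt_of_le_of_ne (S.h_le_one (by omega)) (hone _ (by omega))
      refine limsup_le_of_le (by isBoundedDefault) ?_
      filter_upwards [eventually_ge_atTop 1, S.h_tendsto.eventually (lt_mem_nhds hlt),
        S.h_tendsto.eventually (lt_mem_nhds one_pos)] with n hn1 hn2 hn3
      have hnull : μH[S.h n] (limitSet S.g (N-1)) = 0 := by
        have : dimH (limitSet S.g (N-1)) < ((S.h n).toNNReal : ENNReal) := by
          rw [S.h_dim (N-1) (by omega)]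
          exact (ENNReal.ofReal_lt_ofReal_iff hn3).2 hn2
        have := hausdorffMeasure_of_dimH_lt this
        rwa [Real.coe_toNNReal _ hn3.le] at this
      refine (S.meas_bound hn1 hκ hn3 hN (S.h_dim n hn1) hnull).trans ?_
      refine ENNReal.ofReal_le_ofReal ?_
      have : κ ^ S.h n ≤ κ := by
        simpa using Real.rpow_le_rpow_of_exponent_le hκ.le (S.h_le_one hn1)
      have h0 : 0 ≤ κ ^ S.h n := Real.rpow_nonneg (by linarith) _
      exact mul_le_mul this this h0 (by linarith)
    have hl : Tendsto (fun κ : ℝ => ENNReal.ofReal (κ * κ)) (𝓝[>] 1) (𝓝 1) := by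
      have : Tendsto (fun κ : ℝ => ENNReal.ofReal (κ * κ)) (𝓝 1) (𝓝 (ENNReal.ofReal (1 * 1))) :=
        (ENNReal.continuous_ofReal.comp (continuous_id.mul continuous_id)).tendsto 1
      rw [mul_one, ENNReal.ofReal_one] at this
      exact this.mono_left nhdsWithin_le_nhds
    refine ge_of_tendsto hl ?_
    filter_upwards [self_mem_nhdsWithin] with κ hκ
    exact key κ hκ
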